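/- Fix an integer N_r ≥ 2 and a real number p with 0 < p ≤ 1. Then π₁(p, 1, N_r) = 1 / (N_r − p), and consequently π₁(p, p', N_r) ≤ 1 / (N_r − p) for every p' ∈ [0,1]. -/

import Mathlib

section CollisionProbability

variable {K : Type*} [Field K]

/-- The steady-state packet-collision probability `π₁(p, p', N_r)`, with `p' = q` and `N_r = N`.
The number `N` of resource blocks may be any scalar; the formula is meaningful when `N ≠ 1` and
the denominator does not vanish. -/
def collisionProb (N p q : K) : K :=
  q / ((N - 1) * (p + q * (1 - p) + q * (1 - p) / (N - 1)))

theorem collisionProb_eq_div_convex_combination {N : K} (hN : N ≠ 1) (p q : K) :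
    collisionProb N p q = q / ((1 - q) * ((N - 1) * p) + q * (N - p)) := by
  have hN_sub : N - 1 ≠ 0 := sub_ne_zero.mpr hN
  rw [collisionProb, mul_add, mul_div_cancel₀ _ hN_sub]
  congr 1
  ring

theorem collisionProb_one_right {N : K} (hN : N ≠ 1) (p : K) :
    collisionProb N p 1 = 1 / (N - p) := by
  rw [collisionProb_eq_div_convex_combination hN, sub_self, zero_mul, zero_add, one_mul]

variable [LinearOrder K] [IsStrictOrderedRing K]

theorem strictMonoOn_div_convex_combination {a b : K} (ha : 0 < a) (hb : 0 < b) :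
    StrictMonoOn (fun x ↦ x / ((1 - x) * a + x * b)) (Set.Icc 0 1) := by
  have denom_pos : ∀ x ∈ Set.Icc (0 : K) 1, 0 < (1 - x) * a + x * b := fun x hx ↦
    convex_Ioi (0 : K) ha hb (sub_nonneg.mpr hx.2) hx.1 (sub_add_cancel 1 x)
  intro x hx y hy hxy
  rw [div_lt_div_iff₀ (denom_pos x hx) (denom_pos y hy)]
  calc
    x * ((1 - y) * a + y * b) = x * a + x * y * (b - a) := by ring
    _ < y * a + x * y * (b - a) := by gcongr
    _ = y * ((1 - x) * a + x * b) := by ring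

theorem strictMonoOn_collisionProb {N p : K} (hN : 1 < N) (hp : 0 < p) (hpN : p < N) :
    StrictMonoOn (collisionProb N p) (Set.Icc 0 1) :=
  (strictMonoOn_div_convex_combination (mul_pos (sub_pos.mpr hN) hp) (sub_pos.mpr hpN)).congr
    fun q _ ↦ (collisionProb_eq_div_convex_combination hN.ne' p q).symm

theorem stmt_4_general {N p : K} (hN : 1 < N) (hp : 0 < p) (hpN : p < N) :
    collisionProb N p 1 = 1 / (N - p) ∧
      ∀ q ∈ Set.Icc (0 : K) 1, collisionProb N p q ≤ 1 / (N - p) := by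
  have value_at_one := collisionProb_one_right hN.ne' p
  refine ⟨value_at_one, fun q hq ↦ ?_⟩
  rw [← value_at_one]
  exact (strictMonoOn_collisionProb hN hp hpN).monotoneOn hq
    (Set.right_mem_Icc.mpr zero_le_one) hq.2

end CollisionProbability

theorem stmt_4 (Nr : ℕ) (hNr : 2 ≤ Nr) (p : ℝ) (hp : 0 < p) (hp1 : p ≤ 1) :
    1 / (((Nr : ℝ) - 1) * (p + 1 * (1 - p) + (1 * (1 - p)) / ((Nr : ℝ) - 1))) =
      1 / ((Nr : ℝ) - p) ∧
    ∀ p' ∈ Set.Icc (0:ℝ) 1,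
      p' / (((Nr : ℝ) - 1) * (p + p' * (1 - p) + (p' * (1 - p)) / ((Nr : ℝ) - 1))) ≤
        1 / ((Nr : ℝ) - p) := by
  have one_lt_Nr : (1 : ℝ) < Nr := Nat.one_lt_cast.mpr hNr
  exact stmt_4_general one_lt_Nr hp (hp1.trans_lt one_lt_Nr)
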